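/- Let S > 1 and β₁, β₂ ∈ [0,1) with β₁ + β₂ < 1. Set g_i(t) = |t|^{−β_i} (1 + |t|)^{β_i − S}. Then sup_{ν ≥ 0} ν ∫_{ℝ²} (1 + ν|{w₁ + w₂}|)^{−2} g₁(w₁) g₂(w₂) dw₁ dw₂ < ∞, where {x} ∈ (−π, π] is the 2π-fractional part of x. -/

import Mathlib

open MeasureTheory ENNReal

/-! With `φ(r) = (1 + r)^{-2}`, the kernel `ν φ(ν|{x}|)` is dominated by the periodization of the
dilation `ν φ(ν|x|)`. Since `(1 + r) / r` is decreasing in `r`, the whole singularity of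
`g₁(w₁) g₂(w₂)` can be moved to the smaller variable: for `γ ≥ max(β₁, β₂, β₁ + β₂)` the product is
at most `h(w₁) k(w₂) + h(w₂) k(w₁)`, where `h(t) = |t|^{-γ} (1 + |t|)^{γ - S}` is integrable as soon
as `γ < 1 < S`, and `k(t) = (1 + |t|)^{-S}`. When `w₂` is integrated first, the periodization passes
from the kernel to `k`, whose periodization is bounded, and the integral of the dilated kernel does
not depend on `ν`. -/

section Weight

/-- The profile `r ↦ r^{-β} (1 + r)^{β - S}` of the weights
`g_i(t) = |t|^{-β_i} (1 + |t|)^{β_i - S}`, taken as a function of the radius `r` so that it can be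
composed with any norm. For `β = 0` it is the
non-singular weight `(1 + r)^{-S}`. -/
noncomputable def singularWeight (S β r : ℝ) : ℝ := r ^ (-β) * (1 + r) ^ (β - S)

variable {S β β₁ β₂ γ r s : ℝ}

lemma singularWeight_nonneg (hr : 0 ≤ r) : 0 ≤ singularWeight S β r := by
  unfold singularWeight
  positivity

@[fun_prop]
lemma measurable_singularWeight : Measurable (singularWeight S β) := by
  unfold singularWeight
  fun_prop

lemma singularWeight_zero (S r : ℝ) : singularWeight S 0 r = (1 + r) ^ (-S) := by
  simp [singularWeight]

lemma singularWeight_eq_div_rpow_mul (hr : 0 < r) :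
    singularWeight S β r = ((1 + r) / r) ^ β * (1 + r) ^ (-S) := by
  rw [singularWeight, Real.div_rpow (by positivity) hr.le, Real.rpow_neg hr.le, sub_eq_add_neg,
    Real.rpow_add (by positivity)]
  ring

lemma singularWeight_le_rpow_neg (hβS : β ≤ S) (hr : 0 ≤ r) : singularWeight S β r ≤ r ^ (-β) :=
  mul_le_of_le_one_right (by positivity)
    (Real.rpow_le_one_of_one_le_of_nonpos (by linarith) (by linarith))

lemma singularWeight_le_two_rpow_mul (hβ : β ≤ γ) (hγ : 0 ≤ γ) (hr : 1 ≤ r) :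
    singularWeight S β r ≤ 2 ^ γ * (1 + r) ^ (-S) := by
  have hr₀ : 0 < r := by linarith
  have one_le : 1 ≤ (1 + r) / r := by rw [one_le_div hr₀]; linarith
  have le_two : (1 + r) / r ≤ 2 := by rw [div_le_iff₀ hr₀]; linarith
  rw [singularWeight_eq_div_rpow_mul hr₀]
  gcongr
  calc ((1 + r) / r) ^ β ≤ ((1 + r) / r) ^ γ := Real.rpow_le_rpow_of_exponent_le one_le hβ
    _ ≤ 2 ^ γ := Real.rpow_le_rpow (by positivity) le_two hγ

lemma integrable_singularWeight_norm {E : Type*} [NormedAddCommGroup E] [NormedSpace ℝ E]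
    [FiniteDimensional ℝ E] [Nontrivial E] [MeasurableSpace E] [BorelSpace E] {μ : Measure E}
    [μ.IsAddHaarMeasure] (hβ : β < Module.finrank ℝ E) (hS : Module.finrank ℝ E < S) :
    Integrable (fun x : E ↦ singularWeight S β ‖x‖) μ := by
  have norm_eq (x : E) : ‖singularWeight S β ‖x‖‖ = singularWeight S β ‖x‖ :=
    Real.norm_of_nonneg (singularWeight_nonneg (norm_nonneg x))
  have measurable : Measurable fun x : E ↦ singularWeight S β ‖x‖ := by fun_prop
  have near_zero : IntegrableOn (fun x : E ↦ singularWeight S β ‖x‖) (Metric.ball 0 1) μ := by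
    refine integrableOn_ball_of_norm_le_rpow (C := 1) Module.finrank_pos hβ (.of_forall fun x ↦ ?_)
      measurable.aestronglyMeasurable
    rw [norm_eq, one_mul]
    exact singularWeight_le_rpow_neg (hβ.trans hS).le (norm_nonneg x)
  have near_infinity :
      IntegrableOn (fun x : E ↦ singularWeight S β ‖x‖) (Metric.ball 0 1)ᶜ μ := by
    refine ((integrable_one_add_norm hS).const_mul (2 ^ max β 0)).integrableOn.mono'
      measurable.aestronglyMeasurable
      (ae_restrict_of_forall_mem Metric.isOpen_ball.measurableSet.compl fun x hx ↦ ?_)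
    rw [norm_eq]
    exact singularWeight_le_two_rpow_mul (le_max_left β 0) (le_max_right β 0) (by simpa using hx)
  simpa using near_zero.union near_infinity

lemma rpow_mul_rpow_le_rpow_of_le {a b : ℝ} (hb : 1 ≤ b) (hba : b ≤ a) (h₁ : β₁ ≤ γ)
    (hadd : β₁ + β₂ ≤ γ) : a ^ β₁ * b ^ β₂ ≤ a ^ γ := by
  have ha : 1 ≤ a := hb.trans hba
  have ha₀ : 0 < a := by linarith
  rcases le_total 0 β₂ with hβ₂ | hβ₂
  · calc a ^ β₁ * b ^ β₂ ≤ a ^ β₁ * a ^ β₂ := by gcongr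
      _ = a ^ (β₁ + β₂) := (Real.rpow_add ha₀ β₁ β₂).symm
      _ ≤ a ^ γ := Real.rpow_le_rpow_of_exponent_le ha hadd
  · calc a ^ β₁ * b ^ β₂ ≤ a ^ β₁ * 1 := by
          gcongr
          exact Real.rpow_le_one_of_one_le_of_nonpos hb hβ₂
      _ ≤ a ^ γ := by
          rw [mul_one]
          exact Real.rpow_le_rpow_of_exponent_le ha h₁

lemma singularWeight_mul_singularWeight_le_of_le (hr : 0 < r) (hrs : r ≤ s) (h₁ : β₁ ≤ γ)
    (hadd : β₁ + β₂ ≤ γ) :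
    singularWeight S β₁ r * singularWeight S β₂ s ≤
      singularWeight S γ r * singularWeight S 0 s := by
  have hs : 0 < s := hr.trans_le hrs
  have one_le : 1 ≤ (1 + s) / s := by rw [one_le_div hs]; linarith
  have ratio_le : (1 + s) / s ≤ (1 + r) / r := by rw [div_le_div_iff₀ hs hr]; linarith
  rw [singularWeight_zero, singularWeight_eq_div_rpow_mul hr, singularWeight_eq_div_rpow_mul hs,
    singularWeight_eq_div_rpow_mul hr]
  calc ((1 + r) / r) ^ β₁ * (1 + r) ^ (-S) * (((1 + s) / s) ^ β₂ * (1 + s) ^ (-S))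
      = ((1 + r) / r) ^ β₁ * ((1 + s) / s) ^ β₂ * ((1 + r) ^ (-S) * (1 + s) ^ (-S)) := by ring
    _ ≤ ((1 + r) / r) ^ γ * ((1 + r) ^ (-S) * (1 + s) ^ (-S)) := by
        gcongr
        exact rpow_mul_rpow_le_rpow_of_le one_le ratio_le h₁ hadd
    _ = ((1 + r) / r) ^ γ * (1 + r) ^ (-S) * (1 + s) ^ (-S) := by ring

lemma singularWeight_mul_singularWeight_le_add (hr : 0 < r) (hs : 0 < s) (h₁ : β₁ ≤ γ)
    (h₂ : β₂ ≤ γ) (hadd : β₁ + β₂ ≤ γ) :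
    singularWeight S β₁ r * singularWeight S β₂ s ≤
      singularWeight S γ r * singularWeight S 0 s +
        singularWeight S γ s * singularWeight S 0 r := by
  have nonneg {a b c d : ℝ} (ha : 0 < a) (hb : 0 < b) :
      0 ≤ singularWeight S c a * singularWeight S d b :=
    mul_nonneg (singularWeight_nonneg ha.le) (singularWeight_nonneg hb.le)
  rcases le_total r s with hrs | hsr
  · exact (singularWeight_mul_singularWeight_le_of_le hr hrs h₁ hadd).trans
      (le_add_of_nonneg_right (nonneg hs hr))
  · rw [mul_comm (singularWeight S β₁ r)]
    exact (singularWeight_mul_singularWeight_le_of_le hs hsr h₂ (add_comm β₁ β₂ ▸ hadd)).trans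
      (le_add_of_nonneg_left (nonneg hr hs))

end Weight

section Lintegral

lemma lintegral_add_swap_prod {α : Type*} [MeasurableSpace α] {μ : Measure α} [SFinite μ]
    {F : α × α → ℝ≥0∞} (hF : Measurable F) :
    ∫⁻ w, (F w + F w.swap) ∂μ.prod μ = 2 * ∫⁻ w, F w ∂μ.prod μ := by
  rw [lintegral_add_left hF, lintegral_prod_swap, two_mul]

lemma ofReal_abs_mul_lintegral_comp_mul_left {a : ℝ} (ha : a ≠ 0) {f : ℝ → ℝ≥0∞}
    (hf : Measurable f) : ENNReal.ofReal |a| * ∫⁻ x, f (a * x) = ∫⁻ x, f x := by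
  conv_rhs => rw [← Real.smul_map_volume_mul_left ha]
  rw [lintegral_smul_measure, lintegral_map hf (measurable_const_mul a), smul_eq_mul]

lemma lintegral_mul_singularWeight_mul_singularWeight_le {E : Type*} [NormedAddCommGroup E]
    [MeasurableSpace E] [BorelSpace E] [SecondCountableTopology E] {μ : Measure E} [SFinite μ]
    [NullSingletonClass μ] {K : E → ℝ≥0∞} (hK : Measurable K) {S β₁ β₂ γ : ℝ} (h₁ : β₁ ≤ γ)
    (h₂ : β₂ ≤ γ) (hadd : β₁ + β₂ ≤ γ) :
    ∫⁻ w : E × E, K (w.1 + w.2) *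
        ENNReal.ofReal (singularWeight S β₁ ‖w.1‖ * singularWeight S β₂ ‖w.2‖) ∂μ.prod μ ≤
      2 * ∫⁻ w : E × E, K (w.1 + w.2) * (ENNReal.ofReal (singularWeight S γ ‖w.1‖) *
        ENNReal.ofReal (singularWeight S 0 ‖w.2‖)) ∂μ.prod μ := by
  rw [← lintegral_add_swap_prod (by fun_prop)]
  have ne_zero : ∀ᵐ w : E × E ∂μ.prod μ, w.1 ≠ 0 ∧ w.2 ≠ 0 :=
    (Measure.quasiMeasurePreserving_fst.ae (μ.ae_ne 0)).and
      (Measure.quasiMeasurePreserving_snd.ae (μ.ae_ne 0))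
  refine lintegral_mono_ae ?_
  filter_upwards [ne_zero] with ⟨x, y⟩ ⟨hx, hy⟩
  have nonneg {β : ℝ} (z : E) : 0 ≤ singularWeight S β ‖z‖ := singularWeight_nonneg (norm_nonneg z)
  simp only [Prod.swap_prod_mk]
  rw [add_comm y x, ← mul_add, ← ofReal_mul (nonneg x), ← ofReal_mul (nonneg y),
    ← ofReal_add (mul_nonneg (nonneg x) (nonneg y)) (mul_nonneg (nonneg y) (nonneg x))]
  gcongr
  exact singularWeight_mul_singularWeight_le_add (norm_pos_iff.2 hx) (norm_pos_iff.2 hy) h₁ h₂ hadd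

variable {G ι : Type*} [AddCommGroup G] [MeasurableSpace G] [MeasurableAdd₂ G] [MeasurableNeg G]
  {μ : Measure G} [μ.IsAddLeftInvariant] [Countable ι] {c : ι → G} {ψ k : G → ℝ≥0∞}
  {C : ℝ≥0∞}

lemma lintegral_tsum_translate_mul_le (hψ : Measurable ψ) (hk : Measurable k)
    (hC : ∀ y, ∑' i, k (y + c i) ≤ C) (a : G) :
    ∫⁻ b, (∑' i, ψ (a + b - c i)) * k b ∂μ ≤ C * ∫⁻ x, ψ x ∂μ := by
  calc ∫⁻ b, (∑' i, ψ (a + b - c i)) * k b ∂μ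
      = ∑' i, ∫⁻ b, ψ (a + b - c i) * k b ∂μ := by
        simp_rw [← ENNReal.tsum_mul_right]
        exact lintegral_tsum fun i ↦ by fun_prop
    _ = ∑' i, ∫⁻ x, ψ x * k (x - a + c i) ∂μ := by
        congr! 2 with i
        rw [← lintegral_add_left_eq_self (fun x ↦ ψ x * k (x - a + c i)) (a - c i)]
        congr! 3 with b <;> abel_nf
    _ = ∫⁻ x, ψ x * ∑' i, k (x - a + c i) ∂μ := by
        simp_rw [← ENNReal.tsum_mul_left]
        exact (lintegral_tsum fun i ↦ by fun_prop).symm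
    _ ≤ ∫⁻ x, ψ x * C ∂μ := by
        gcongr with x
        exact hC (x - a)
    _ = C * ∫⁻ x, ψ x ∂μ := by rw [lintegral_mul_const C hψ, mul_comm]

lemma lintegral_prod_tsum_translate_mul_le [SFinite μ] {h : G → ℝ≥0∞} (hψ : Measurable ψ)
    (hh : Measurable h) (hk : Measurable k) (hC : ∀ y, ∑' i, k (y + c i) ≤ C) :
    ∫⁻ w : G × G, (∑' i, ψ (w.1 + w.2 - c i)) * (h w.1 * k w.2) ∂μ.prod μ ≤
      C * (∫⁻ x, ψ x ∂μ) * ∫⁻ x, h x ∂μ := by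
  rw [lintegral_prod _ (by fun_prop), ← lintegral_const_mul _ hh]
  refine lintegral_mono fun a ↦ ?_
  calc ∫⁻ b, (∑' i, ψ (a + b - c i)) * (h a * k b) ∂μ
      = h a * ∫⁻ b, (∑' i, ψ (a + b - c i)) * k b ∂μ := by
        simp_rw [mul_left_comm]
        exact lintegral_const_mul _ (by fun_prop)
    _ ≤ h a * (C * ∫⁻ x, ψ x ∂μ) := by
        gcongr
        exact lintegral_tsum_translate_mul_le hψ hk hC a
    _ = C * (∫⁻ x, ψ x ∂μ) * h a := mul_comm _ _

end Lintegral

section Periodization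

variable {S T : ℝ}

lemma one_add_norm_add_rpow_neg_le {E : Type*} [SeminormedAddCommGroup E] (hS : 0 ≤ S) (x y : E) :
    (1 + ‖x + y‖) ^ (-S) ≤ (1 + ‖x‖) ^ S * (1 + ‖y‖) ^ (-S) := by
  have peetre : 1 + ‖y‖ ≤ (1 + ‖x‖) * (1 + ‖x + y‖) := by
    have : ‖y‖ ≤ ‖x‖ + ‖x + y‖ := by
      simpa [add_comm] using norm_le_norm_add_norm_sub' y (-x)
    nlinarith [norm_nonneg x, norm_nonneg (x + y)]
  rw [Real.rpow_neg (by positivity), Real.rpow_neg (by positivity), ← div_eq_mul_inv,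
    inv_eq_one_div, div_le_div_iff₀ (by positivity) (by positivity), one_mul,
    ← Real.mul_rpow (by positivity) (by positivity)]
  exact Real.rpow_le_rpow (by positivity) peetre hS

lemma summable_one_add_abs_mul_int_rpow (hT : T ≠ 0) (hS : 1 < S) :
    Summable fun n : ℤ ↦ (1 + |T * n|) ^ (-S) := by
  refine ((Real.summable_abs_int_rpow hS).mul_left (|T| ^ (-S))).of_norm_bounded_eventually ?_
  -- The comparison fails at `n = 0`, where `|0| ^ (-S) = 0`.
  filter_upwards [(Set.finite_singleton (0 : ℤ)).compl_mem_cofinite] with n hn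
  have hTn : 0 < |T * n| := abs_pos.2 (mul_ne_zero hT (Int.cast_ne_zero.2 hn))
  rw [Real.norm_of_nonneg (by positivity), ← Real.mul_rpow (abs_nonneg T) (abs_nonneg _), ← abs_mul]
  exact Real.rpow_le_rpow_of_nonpos hTn (by linarith) (by linarith)

lemma exists_int_abs_sub_mul_le (hT : T ≠ 0) (y : ℝ) : ∃ m : ℤ, |y - T * m| ≤ |T| := by
  refine ⟨round (y / T), ?_⟩
  calc |y - T * round (y / T)| = |T| * |y / T - round (y / T)| := by
        rw [← abs_mul, mul_sub, mul_div_cancel₀ y hT]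
    _ ≤ |T| * 1 := by gcongr; linarith [abs_sub_round (y / T)]
    _ = |T| := mul_one _

lemma tsum_one_add_abs_add_mul_int_rpow_le (hT : T ≠ 0) (hS : 0 ≤ S) (y : ℝ) :
    ∑' n : ℤ, ENNReal.ofReal ((1 + |y + T * n|) ^ (-S)) ≤
      ENNReal.ofReal ((1 + |T|) ^ S) * ∑' n : ℤ, ENNReal.ofReal ((1 + |T * n|) ^ (-S)) := by
  obtain ⟨m, hm⟩ := exists_int_abs_sub_mul_le hT y
  rw [← (Equiv.subRight m).tsum_eq, ← ENNReal.tsum_mul_left]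
  refine ENNReal.tsum_le_tsum fun n ↦ ?_
  rw [← ofReal_mul (by positivity)]
  refine ofReal_le_ofReal ?_
  calc (1 + |y + T * (n - m : ℤ)|) ^ (-S) = (1 + |(y - T * m) + T * n|) ^ (-S) := by
        push_cast
        ring_nf
    _ ≤ (1 + |y - T * m|) ^ S * (1 + |T * n|) ^ (-S) := by
        simpa only [Real.norm_eq_abs] using
          one_add_norm_add_rpow_neg_le hS (y - T * m) (T * n)
    _ ≤ (1 + |T|) ^ S * (1 + |T * n|) ^ (-S) := by gcongr

lemma exists_forall_tsum_singularWeight_zero_le (hT : T ≠ 0) (hS : 1 < S) :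
    ∃ C < ∞, ∀ y : ℝ, ∑' n : ℤ, ENNReal.ofReal (singularWeight S 0 ‖y + T * n‖) ≤ C := by
  simp_rw [singularWeight_zero]
  exact ⟨_, mul_lt_top ofReal_lt_top (summable_one_add_abs_mul_int_rpow hT hS).tsum_ofReal_lt_top,
    tsum_one_add_abs_add_mul_int_rpow_le hT (by linarith)⟩

end Periodization

section Supremum

variable {T : ℝ} {rep : ℝ → ℝ} {φ : ℝ → ℝ} {S β₁ β₂ γ : ℝ}

lemma lintegral_comp_representative_mul_singularWeight_le (hrep : ∀ x, ∃ k : ℤ, x - rep x = T * k)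
    (hφ : Measurable φ) (h₁ : β₁ ≤ γ) (h₂ : β₂ ≤ γ) (hadd : β₁ + β₂ ≤ γ) {C : ℝ≥0∞}
    (hC : ∀ y : ℝ, ∑' n : ℤ, ENNReal.ofReal (singularWeight S 0 ‖y + T * n‖) ≤ C) :
    ∫⁻ w : ℝ × ℝ, ENNReal.ofReal (φ |rep (w.1 + w.2)| *
        singularWeight S β₁ |w.1| * singularWeight S β₂ |w.2|) ≤
      2 * (C * (∫⁻ t, ENNReal.ofReal (φ |t|)) *
        ∫⁻ t : ℝ, ENNReal.ofReal (singularWeight S γ ‖t‖)) := by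
  set Φ : ℝ → ℝ≥0∞ := fun x ↦ ∑' n : ℤ, ENNReal.ofReal (φ |x - T * n|)
  have kernel_le (x : ℝ) : ENNReal.ofReal (φ |rep x|) ≤ Φ x := by
    obtain ⟨k, hk⟩ := hrep x
    rw [show rep x = x - T * k by linarith]
    exact ENNReal.le_tsum (f := fun n : ℤ ↦ ENNReal.ofReal (φ |x - T * n|)) k
  calc ∫⁻ w : ℝ × ℝ, ENNReal.ofReal (φ |rep (w.1 + w.2)| *
          singularWeight S β₁ |w.1| * singularWeight S β₂ |w.2|)
      ≤ ∫⁻ w : ℝ × ℝ, Φ (w.1 + w.2) *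
          ENNReal.ofReal (singularWeight S β₁ ‖w.1‖ * singularWeight S β₂ ‖w.2‖) := by
        refine lintegral_mono fun w ↦ ?_
        rw [mul_assoc, ofReal_mul' (mul_nonneg (singularWeight_nonneg (abs_nonneg _))
          (singularWeight_nonneg (abs_nonneg _)))]
        exact mul_le_mul_left (kernel_le _) _
    _ ≤ 2 * ∫⁻ w : ℝ × ℝ, Φ (w.1 + w.2) * (ENNReal.ofReal (singularWeight S γ ‖w.1‖) *
          ENNReal.ofReal (singularWeight S 0 ‖w.2‖)) :=
        lintegral_mul_singularWeight_mul_singularWeight_le (by fun_prop) h₁ h₂ hadd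
    _ ≤ 2 * (C * (∫⁻ t, ENNReal.ofReal (φ |t|)) *
          ∫⁻ t : ℝ, ENNReal.ofReal (singularWeight S γ ‖t‖)) := by
        gcongr
        exact lintegral_prod_tsum_translate_mul_le (c := fun n : ℤ ↦ T * n)
          (ψ := fun t ↦ ENNReal.ofReal (φ |t|))
          (k := fun t ↦ ENNReal.ofReal (singularWeight S 0 ‖t‖))
          (by fun_prop) (by fun_prop) (by fun_prop) hC

theorem sup_nu_integral_lt_top_general (hT : T ≠ 0)
    (hrep : ∀ x, ∃ k : ℤ, x - rep x = T * k) (hφ : Measurable φ)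
    (hφ_int : ∫⁻ t, ENNReal.ofReal (φ |t|) < ∞) (hS : 1 < S) (h₁ : β₁ < 1) (h₂ : β₂ < 1)
    (hadd : β₁ + β₂ < 1) :
    (⨆ (ν : ℝ) (_ : 0 ≤ ν), ENNReal.ofReal ν *
      ∫⁻ w : ℝ × ℝ, ENNReal.ofReal (φ (ν * |rep (w.1 + w.2)|) *
        singularWeight S β₁ |w.1| * singularWeight S β₂ |w.2|)) < ∞ := by
  obtain ⟨C, C_lt_top, hC⟩ := exists_forall_tsum_singularWeight_zero_le hT hS
  obtain ⟨γ, hγ, hγ_one⟩ := exists_between (max_lt (max_lt h₁ h₂) hadd)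
  simp only [max_lt_iff] at hγ
  set W := ∫⁻ t : ℝ, ENNReal.ofReal (singularWeight S γ ‖t‖)
  have W_lt_top : W < ∞ :=
    (integrable_singularWeight_norm (by simpa using hγ_one) (by simpa using hS)).lintegral_lt_top
  refine lt_of_le_of_lt (iSup₂_le fun ν hν ↦ ?_)
    (mul_lt_top (ofNat_lt_top (n := 2)) (mul_lt_top (mul_lt_top C_lt_top hφ_int) W_lt_top))
  rcases hν.eq_or_lt with rfl | hν
  · simp
  have dilate : ENNReal.ofReal ν * ∫⁻ t, ENNReal.ofReal (φ (ν * |t|)) =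
      ∫⁻ t, ENNReal.ofReal (φ |t|) := by
    simpa [abs_mul, abs_of_pos hν] using ofReal_abs_mul_lintegral_comp_mul_left hν.ne'
      (f := fun t ↦ ENNReal.ofReal (φ |t|)) (by fun_prop)
  calc _ ≤ ENNReal.ofReal ν * (2 * (C * (∫⁻ t, ENNReal.ofReal (φ (ν * |t|))) * W)) := by
        gcongr
        exact lintegral_comp_representative_mul_singularWeight_le (φ := fun r ↦ φ (ν * r)) hrep
          (by fun_prop) hγ.1.1.le hγ.1.2.le hγ.2.le hC
    _ = 2 * (C * (∫⁻ t, ENNReal.ofReal (φ |t|)) * W) := by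
        rw [← dilate]
        ring

end Supremum

/-- For `S > 1` and `β₁, β₂ ∈ [0,1)` with `β₁ + β₂ < 1`, with
`g_i(t) = |t|^{-β_i}(1+|t|)^{β_i - S}`,
`sup_{ν ≥ 0} ν ∫_{ℝ²} (1+ν|{w₁+w₂}|)^{-2} g₁(w₁) g₂(w₂) dw < ∞`,
where `{x}` is the unique element of `(-π,π]` with `x - {x} ∈ 2πℤ`. -/
theorem sup_nu_integral_lt_top
    (frac : ℝ → ℝ)
    (hfrac : ∀ x : ℝ, frac x ∈ Set.Ioc (-Real.pi) Real.pi ∧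
      ∃ k : ℤ, x - frac x = 2 * Real.pi * k)
    (S β₁ β₂ : ℝ) (hS : 1 < S)
    (h₁ : β₁ ∈ Set.Ico (0:ℝ) 1) (h₂ : β₂ ∈ Set.Ico (0:ℝ) 1)
    (hsum : β₁ + β₂ < 1) :
    (⨆ (ν : ℝ) (_ : 0 ≤ ν), ENNReal.ofReal ν *
      ∫⁻ w : ℝ × ℝ, ENNReal.ofReal
        ((1 + ν * |frac (w.1 + w.2)|) ^ (-(2:ℝ)) *
          (|w.1| ^ (-β₁) * (1 + |w.1|) ^ (β₁ - S)) *
          (|w.2| ^ (-β₂) * (1 + |w.2|) ^ (β₂ - S)))) < ⊤ := by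
  have kernel_lt_top : ∫⁻ t : ℝ, ENNReal.ofReal ((1 + |t|) ^ (-(2 : ℝ))) < ∞ :=
    (integrable_one_add_norm (by simp)).lintegral_lt_top
  exact sup_nu_integral_lt_top_general Real.two_pi_pos.ne' (fun x ↦ (hfrac x).2)
    (φ := fun r ↦ (1 + r) ^ (-(2 : ℝ))) (by fun_prop) kernel_lt_top hS h₁.2 h₂.2 hsum
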